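/- Let m ≥ 1 be an integer. There exists a constant C > 0, depending only on m, such that for every isotropic log-concave probability density p on ℝ^m: (i) sup_{x ∈ ℝ^m} p(x) ≤ C; (ii) p(x) ≥ C^{-1} for all x ∈ ℝ^m with ‖x‖ ≤ C^{-1}; (iii) p(x) ≤ C·exp(−‖x‖/C) for all x ∈ ℝ^m. -/

import Mathlib

open MeasureTheory

noncomputable section

/-- The Euclidean norm of a vector in `Fin m → ℝ`. -/
def eNorm {m : ℕ} (x : Fin m → ℝ) : ℝ := Real.sqrt (∑ i, x i ^ 2)

/-- A nonnegative function `p` on `ℝ^m` is log-concave: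
`p(tx + (1-t)y) ≥ p(x)^t p(y)^(1-t)` for `t ∈ [0,1]`. -/
def IsLogConcaveFn {m : ℕ} (p : (Fin m → ℝ) → ℝ) : Prop :=
  ∀ x y : Fin m → ℝ, ∀ t : ℝ, 0 ≤ t → t ≤ 1 →
    p x ^ t * p y ^ (1 - t) ≤ p (t • x + (1 - t) • y)

/-!
Fix `x`, and let `S` be the superlevel set `{p ≥ p x / e}`. Log-concavity makes `p` decay
exponentially outside `S`: if `S` has half-width `r` around `x` in some direction, then the second
moment of `p` about `x` in that direction is at most a constant times `r ^ 2`. As it is at least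
`1`, the width of `S` is bounded below in every direction, so the convex set `S` contains a
parallelepiped of definite volume, and `∫ p = 1` bounds `p x`.

Given this bound, by Chebyshev's inequality `p` is bounded below on a core of definite volume near
the origin. If `p x` were not exponentially small in `‖x‖`, the image of the core under a homothety
centred at `x` would be far from the origin and still carry so much mass that the second moment
would be exceeded. This gives the tail bound.

The tail bound controls the third absolute moment, so the mean of the positive part of `⟪a, ·⟫` is
bounded below, uniformly over unit vectors `a`. If `p` were tiny at a point `x` close to the
origin, a hyperplane through `x` separating it from a superlevel set would contradict this.
-/

open Module Real Set
open scoped RealInnerProductSpace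

/-- Log-concavity of a nonnegative function on a real vector space, in multiplicative form. Since
`0 ^ 0 = 1` in `ℝ`, the inequality is trivial at the endpoints `a = 0` and `b = 0`. -/
structure LogConcave {E : Type*} [AddCommGroup E] [Module ℝ E] (p : E → ℝ) : Prop where
  nonneg : ∀ x, 0 ≤ p x
  rpow_mul_rpow_le : ∀ x y : E, ∀ a b : ℝ, 0 ≤ a → 0 ≤ b → a + b = 1 →
    p x ^ a * p y ^ b ≤ p (a • x + b • y)

lemma mul_log_div_sq_le {u M : ℝ} (hu : 0 ≤ u) (huM : u ≤ M) :
    u * log (M / u) ^ 2 ≤ 16 * √(M * u) := by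
  rcases hu.eq_or_lt with rfl | hu
  · simp
  have hs : 1 ≤ M / u := (one_le_div hu).2 huM
  have hlog : log (M / u) ≤ 4 * (M / u) ^ (1 / 4 : ℝ) := by
    have := log_le_rpow_div (zero_le_one.trans hs) (by norm_num : (0 : ℝ) < 1 / 4)
    linarith
  calc u * log (M / u) ^ 2
      ≤ u * (4 * (M / u) ^ (1 / 4 : ℝ)) ^ 2 := by
        gcongr
        exact log_nonneg hs
    _ = 16 * (u * √(M / u)) := by
        rw [mul_pow, ← rpow_mul_natCast (zero_le_one.trans hs), sqrt_eq_rpow]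
        norm_num
        ring
    _ = 16 * √(M * u) := by
        have : M * u = u ^ 2 * (M / u) := by field_simp
        rw [this, sqrt_mul (sq_nonneg u), sqrt_sq hu.le]

namespace LogConcave

section Module

variable {E : Type*} [AddCommGroup E] [Module ℝ E] {p : E → ℝ}

lemma sqrt_mul_le_midpoint (hp : LogConcave p) (x y : E) :
    √(p x * p y) ≤ p (midpoint ℝ x y) := by
  have h := hp.rpow_mul_rpow_le x y (1 / 2) (1 / 2) (by norm_num) (by norm_num) (by norm_num)
  rwa [← sqrt_eq_rpow, ← sqrt_eq_rpow, ← sqrt_mul (hp.nonneg x), ← smul_add, one_div,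
    ← invOf_eq_inv, ← midpoint_eq_smul_add] at h

lemma convex_superlevel (hp : LogConcave p) (θ : ℝ) : Convex ℝ {x | θ ≤ p x} := by
  intro x hx y hy a b ha hb hab
  simp only [mem_ofPred_eq] at hx hy ⊢
  rcases le_or_gt θ 0 with hθ | hθ
  · exact hθ.trans (hp.nonneg _)
  calc θ = θ ^ a * θ ^ b := by rw [← rpow_add hθ, hab, rpow_one]
    _ ≤ p x ^ a * p y ^ b := by
        have := hp.nonneg x
        gcongr
    _ ≤ p (a • x + b • y) := hp.rpow_mul_rpow_le x y a b ha hb hab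

lemma exp_neg_one_mul_le_lineMap (hp : LogConcave p) {x y : E} (hy : 0 < p y)
    (hyx : p y ≤ exp (-1) * p x) :
    exp (-1) * p x ≤ p (AffineMap.lineMap x y (log (p x / p y))⁻¹) := by
  set t := log (p x / p y) with ht
  have hx : 0 < p x := pos_of_mul_pos_right (hy.trans_le hyx) (exp_pos _).le
  have ht_one : 1 ≤ t := by
    rwa [ht, le_log_iff_exp_le (by positivity), le_div_iff₀ hy, ← le_inv_mul_iff₀ (exp_pos 1),
      ← exp_neg]
  have hy_eq : p y = exp (-t) * p x := by
    rw [exp_neg, ht, exp_log (by positivity)]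
    field_simp
  have h := hp.rpow_mul_rpow_le x y (1 - t⁻¹) t⁻¹ (sub_nonneg.2 (inv_le_one_of_one_le₀ ht_one))
    (by positivity) (by ring)
  rw [← AffineMap.lineMap_apply_module] at h
  refine le_of_eq_of_le ?_ h
  rw [hy_eq, mul_rpow (exp_pos _).le hx.le, ← exp_mul, mul_left_comm, ← rpow_add hx,
    neg_mul, mul_inv_cancel₀ (by positivity), sub_add_cancel, rpow_one]

lemma exp_neg_one_mul_le_homothety (hp : LogConcave p) {x y : E} {c l : ℝ} (hc : 0 < c)
    (hl0 : 0 < l) (hl1 : l ≤ 1) (hx : c * exp (-l⁻¹) ≤ p x) (hy : c ≤ p y) :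
    exp (-1) * c ≤ p (AffineMap.homothety x (1 - l) y) := by
  rw [AffineMap.homothety_eq_lineMap, AffineMap.lineMap_apply_module, sub_sub_cancel]
  calc exp (-1) * c = (c * exp (-l⁻¹)) ^ l * c ^ (1 - l) := by
        rw [mul_rpow hc.le (exp_pos _).le, ← exp_mul, neg_mul, inv_mul_cancel₀ hl0.ne',
          mul_right_comm, ← rpow_add hc, add_sub_cancel, rpow_one, mul_comm]
    _ ≤ p x ^ l * p y ^ (1 - l) := by
        have := sub_nonneg.2 hl1
        have := rpow_nonneg (hp.nonneg x) l
        gcongr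
    _ ≤ _ := hp.rpow_mul_rpow_le x y l (1 - l) hl0.le (sub_nonneg.2 hl1) (add_sub_cancel _ _)

/- Where `p y ≤ p x / e`, the point at parameter `1 / log (p x / p y)` of the segment from `x` to
`y` still has density at least `p x / e`, so `|f (y - x)| ≤ r log (p x / p y)`. -/
lemma sq_apply_sub_mul_le (hp : LogConcave p) (f : E →ₗ[ℝ] ℝ) {x : E} {r : ℝ}
    (hr : ∀ y, exp (-1) * p x ≤ p y → |f (y - x)| ≤ r) (y : E) :
    f (y - x) ^ 2 * p y ≤ r ^ 2 * (p y + 16 * √(p x * p y)) := by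
  have hy := hp.nonneg y
  rcases le_or_gt (exp (-1) * p x) (p y) with hyx | hyx
  · calc f (y - x) ^ 2 * p y ≤ r ^ 2 * p y :=
          mul_le_mul_of_nonneg_right (sq_le_sq.2 ((hr y hyx).trans (le_abs_self r))) hy
      _ ≤ r ^ 2 * (p y + 16 * √(p x * p y)) := by
          gcongr
          exact le_add_of_nonneg_right (by positivity)
  rcases hy.eq_or_lt with hy0 | hy0
  · rw [← hy0]
    simp
  have hlt : p y < p x :=
    hyx.trans_le (mul_le_of_le_one_left (hp.nonneg x) (exp_le_one_iff.2 (by norm_num)))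
  have ht : 0 < log (p x / p y) := log_pos ((one_lt_div hy0).2 hlt)
  have hf : |f (y - x)| ≤ r * log (p x / p y) := by
    have h := hr _ (hp.exp_neg_one_mul_le_lineMap hy0 hyx.le)
    rw [← vsub_eq_sub, AffineMap.lineMap_vsub_left, map_smul, smul_eq_mul, abs_mul,
      abs_of_pos (inv_pos.2 ht), inv_mul_le_iff₀ ht, vsub_eq_sub] at h
    linarith
  calc f (y - x) ^ 2 * p y ≤ (r * log (p x / p y)) ^ 2 * p y :=
        mul_le_mul_of_nonneg_right (sq_le_sq.2 (hf.trans (le_abs_self _))) hy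
    _ = r ^ 2 * (p y * log (p x / p y) ^ 2) := by ring
    _ ≤ r ^ 2 * (p y + 16 * √(p x * p y)) := by
        gcongr
        linarith [mul_log_div_sq_le hy hlt.le]

end Module

end LogConcave

section Integral

variable {E : Type*} [NormedAddCommGroup E] [NormedSpace ℝ E] [FiniteDimensional ℝ E]
  [MeasurableSpace E] [BorelSpace E]

lemma integrable_comp_midpoint {F : Type*} [NormedAddCommGroup F] {μ : Measure E}
    [μ.IsAddHaarMeasure] {g : E → F} (hg : Integrable g μ) (x : E) :
    Integrable (fun y => g (midpoint ℝ x y)) μ := by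
  simp only [midpoint_eq_smul_add]
  exact (hg.comp_smul (Invertible.ne_zero (⅟2 : ℝ))).comp_add_left x

lemma integral_comp_midpoint {F : Type*} [NormedAddCommGroup F] [NormedSpace ℝ F] (μ : Measure E)
    [μ.IsAddHaarMeasure] (g : E → F) (x : E) :
    ∫ y, g (midpoint ℝ x y) ∂μ = (2 : ℝ) ^ finrank ℝ E • ∫ y, g y ∂μ := by
  simp only [midpoint_eq_smul_add]
  rw [integral_add_left_eq_self (fun y => g ((⅟2 : ℝ) • y)) x, Measure.integral_comp_smul]
  simp

namespace LogConcave

variable {p : E → ℝ}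

lemma integrable_sqrt_mul (hp : LogConcave p) {μ : Measure E} [μ.IsAddHaarMeasure]
    (hpi : Integrable p μ) (x : E) : Integrable (fun y => √(p x * p y)) μ := by
  refine (integrable_comp_midpoint hpi x).mono'
    (continuous_sqrt.comp_aestronglyMeasurable (hpi.aestronglyMeasurable.const_mul _))
    (.of_forall fun y => ?_)
  rw [norm_of_nonneg (sqrt_nonneg _)]
  exact hp.sqrt_mul_le_midpoint x y

lemma integral_sqrt_mul_le (hp : LogConcave p) {μ : Measure E} [μ.IsAddHaarMeasure]
    (hpi : Integrable p μ) (x : E) :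
    ∫ y, √(p x * p y) ∂μ ≤ 2 ^ finrank ℝ E * ∫ y, p y ∂μ := by
  rw [← smul_eq_mul, ← integral_comp_midpoint μ p x]
  exact integral_mono (hp.integrable_sqrt_mul hpi x) (integrable_comp_midpoint hpi x)
    (hp.sqrt_mul_le_midpoint x)

lemma integral_sq_apply_sub_mul_le (hp : LogConcave p) {μ : Measure E} [μ.IsAddHaarMeasure]
    (hpi : Integrable p μ) (f : E →ₗ[ℝ] ℝ) {x : E} {r : ℝ}
    (hr : ∀ y, exp (-1) * p x ≤ p y → |f (y - x)| ≤ r) :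
    ∫ y, f (y - x) ^ 2 * p y ∂μ ≤ r ^ 2 * ((1 + 16 * 2 ^ finrank ℝ E) * ∫ y, p y ∂μ) := by
  have hsqrt := (hp.integrable_sqrt_mul hpi x).const_mul 16
  calc ∫ y, f (y - x) ^ 2 * p y ∂μ
      ≤ ∫ y, r ^ 2 * (p y + 16 * √(p x * p y)) ∂μ :=
        integral_mono_of_nonneg (.of_forall fun y => mul_nonneg (sq_nonneg _) (hp.nonneg y))
          ((hpi.add hsqrt).const_mul _) (.of_forall (hp.sq_apply_sub_mul_le f hr))
    _ = r ^ 2 * (∫ y, p y ∂μ + 16 * ∫ y, √(p x * p y) ∂μ) := by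
        rw [integral_const_mul, integral_add hpi hsqrt, integral_const_mul]
    _ ≤ r ^ 2 * ((1 + 16 * 2 ^ finrank ℝ E) * ∫ y, p y ∂μ) := by
        gcongr
        linarith [hp.integral_sqrt_mul_le hpi x]

end LogConcave

end Integral

section Parallelepiped

/- Replace the basis vectors one at a time: as a function of the `k`-th vector the determinant is
a linear functional, whose norm is at least its value at `b k`. -/
lemma exists_forall_mem_pow_card_le_abs_det {ι E : Type*} [Fintype ι] [DecidableEq ι]
    [NormedAddCommGroup E] [NormedSpace ℝ E] [FiniteDimensional ℝ E] (b : Basis ι ℝ E)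
    (hb : ∀ i, ‖b i‖ = 1) {S : Set E} {c : ℝ} (hc : 0 ≤ c)
    (hS : ∀ f : StrongDual ℝ E, ∃ v ∈ S, c * ‖f‖ ≤ |f v|) :
    ∃ v : ι → E, (∀ i, v i ∈ S) ∧ c ^ Fintype.card ι ≤ |b.det v| := by
  suffices h : ∀ s : Finset ι, ∃ v : ι → E, (∀ i ∈ s, v i ∈ S) ∧ (∀ i ∉ s, v i = b i) ∧
      c ^ s.card ≤ |b.det v| by
    obtain ⟨v, hv, -, hdet⟩ := h Finset.univ
    exact ⟨v, fun i => hv i (Finset.mem_univ i), hdet⟩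
  intro s
  induction s using Finset.induction_on with
  | empty => exact ⟨b, by simp, by simp, by simp [b.det_self]⟩
  | insert k s hk ih =>
    obtain ⟨v, hvS, hvb, hdet⟩ := ih
    let f : StrongDual ℝ E := (b.det.toMultilinearMap.toLinearMap v k).toContinuousLinearMap
    have hf : ∀ w, f w = b.det (Function.update v k w) := fun w => rfl
    obtain ⟨w, hwS, hw⟩ := hS f
    have hfk : |b.det v| ≤ ‖f‖ := by
      have h := f.le_opNorm (b k)
      rwa [hb k, mul_one, hf, ← hvb k hk, Function.update_eq_self, norm_eq_abs] at h
    refine ⟨Function.update v k w, fun i hi => ?_, fun i hi => ?_, ?_⟩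
    · rcases eq_or_ne i k with rfl | hik
      · rwa [Function.update_self]
      · rw [Function.update_of_ne hik]
        exact hvS i (Finset.mem_of_mem_insert_of_ne hi hik)
    · rw [Finset.mem_insert, not_or] at hi
      rw [Function.update_of_ne hi.1, hvb i hi.2]
    · calc c ^ (insert k s).card = c * c ^ s.card := by
            rw [Finset.card_insert_of_notMem hk, pow_succ']
        _ ≤ c * ‖f‖ := by
            gcongr
            exact hdet.trans hfk
        _ ≤ |b.det (Function.update v k w)| := hw

lemma parallelepiped_smul_inv_card_subset_of_convex {ι E : Type*} [Fintype ι] [AddCommGroup E]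
    [Module ℝ E] {S : Set E} (hS : Convex ℝ S) (h0 : 0 ∈ S) {v : ι → E} (hv : ∀ i, v i ∈ S) :
    parallelepiped (fun i => (Fintype.card ι : ℝ)⁻¹ • v i) ⊆ S := by
  intro x hx
  obtain ⟨t, ⟨ht0, ht1⟩, rfl⟩ := (mem_parallelepiped_iff _ _).1 hx
  rcases isEmpty_or_nonempty ι with hι | hι
  · simpa using h0
  have hmem : ∀ i, t i • v i ∈ S := fun i => hS.smul_mem_of_zero_mem h0 (hv i) ⟨ht0 i, ht1 i⟩
  simp only [smul_comm (t _)]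
  refine hS.sum_mem (fun _ _ => by positivity) ?_ fun i _ => hmem i
  simp

variable {E : Type*} [NormedAddCommGroup E] [InnerProductSpace ℝ E] [FiniteDimensional ℝ E]
  [MeasurableSpace E] [BorelSpace E]

lemma ofReal_pow_finrank_le_volume_of_convex {S : Set E} (hS : Convex ℝ S) (h0 : 0 ∈ S) {c : ℝ}
    (hc : 0 ≤ c) (hwidth : ∀ f : StrongDual ℝ E, ∃ v ∈ S, c * ‖f‖ ≤ |f v|) :
    ENNReal.ofReal ((c / finrank ℝ E) ^ finrank ℝ E) ≤ volume S := by
  let b := stdOrthonormalBasis ℝ E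
  obtain ⟨v, hvS, hdet⟩ := exists_forall_mem_pow_card_le_abs_det b.toBasis
    (fun i => by simp) hc hwidth
  refine le_trans ?_ (measure_mono (parallelepiped_smul_inv_card_subset_of_convex hS h0 hvS))
  rw [← b.addHaar_eq_volume, Measure.addHaar_parallelepiped, AlternatingMap.map_smul_univ]
  refine ENNReal.ofReal_le_ofReal ?_
  rw [Fintype.card_fin] at hdet ⊢
  simp only [Finset.prod_const, Finset.card_univ, Fintype.card_fin, smul_eq_mul, abs_mul, abs_pow,
    abs_inv, Nat.abs_cast, div_eq_inv_mul, mul_pow]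
  gcongr

end Parallelepiped

section Products

variable {α : Type*} [MeasurableSpace α] {μ : Measure α} {f g p : α → ℝ}

lemma integrable_mul_mul_of_sq (hfm : AEStronglyMeasurable f μ) (hgm : AEStronglyMeasurable g μ)
    (hpm : AEStronglyMeasurable p μ) (hf : Integrable (fun x => f x ^ 2 * p x) μ)
    (hg : Integrable (fun x => g x ^ 2 * p x) μ) : Integrable (fun x => f x * g x * p x) μ := by
  refine (hf.norm.add hg.norm).mono' ((hfm.mul hgm).mul hpm) (.of_forall fun x => ?_)
  simp only [Pi.add_apply, norm_mul, norm_pow, ← add_mul]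
  gcongr
  nlinarith [sq_nonneg (‖f x‖ - ‖g x‖), sq_nonneg ‖f x‖, sq_nonneg ‖g x‖]

lemma integrable_mul_of_sq (hfm : AEStronglyMeasurable f μ) (hp : Integrable p μ)
    (hf : Integrable (fun x => f x ^ 2 * p x) μ) : Integrable (fun x => f x * p x) μ := by
  simpa using integrable_mul_mul_of_sq hfm (aestronglyMeasurable_const (b := (1 : ℝ)))
    hp.aestronglyMeasurable hf (by simpa using hp)

end Products

lemma norm_sq_mul_eq_sum_inner_sq_mul {ι E : Type*} [Fintype ι] [NormedAddCommGroup E]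
    [InnerProductSpace ℝ E] (b : OrthonormalBasis ι ℝ E) (x : E) (c : ℝ) :
    ‖x‖ ^ 2 * c = ∑ i, ⟪b i, x⟫ ^ 2 * c := by
  rw [← b.sum_sq_inner_right, Finset.sum_mul]

section Isotropic

variable {E : Type*} [NormedAddCommGroup E] [InnerProductSpace ℝ E] [FiniteDimensional ℝ E]
  [MeasurableSpace E] [BorelSpace E]

/-- A real function on a Euclidean space is isotropic if, as a density for the volume, it has
total mass `1`, barycentre `0` and identity covariance, the last two being tested in every
direction. No integrability is assumed: it follows from the values of the integrals. -/
structure IsIsotropic (p : E → ℝ) : Prop where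
  integral_eq_one : ∫ x, p x = 1
  integral_inner_mul : ∀ a : E, ∫ x, ⟪a, x⟫ * p x = 0
  integral_inner_sq_mul : ∀ a : E, ∫ x, ⟪a, x⟫ ^ 2 * p x = ‖a‖ ^ 2

namespace IsIsotropic

variable {p : E → ℝ}

lemma integrable (hp : IsIsotropic p) : Integrable p :=
  integrable_of_integral_eq_one hp.integral_eq_one

lemma integrable_inner_sq_mul (hp : IsIsotropic p) (a : E) :
    Integrable fun x => ⟪a, x⟫ ^ 2 * p x := by
  rcases eq_or_ne a 0 with rfl | ha
  · simp
  · exact .of_integral_ne_zero (by simpa [hp.integral_inner_sq_mul a] using ha)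

lemma integrable_inner_mul (hp : IsIsotropic p) (a : E) : Integrable fun x => ⟪a, x⟫ * p x :=
  integrable_mul_of_sq (innerSL ℝ a).continuous.aestronglyMeasurable hp.integrable
    (hp.integrable_inner_sq_mul a)

lemma integral_inner_sub_sq_mul (hp : IsIsotropic p) (a : E) (t : ℝ) :
    ∫ x, (⟪a, x⟫ - t) ^ 2 * p x = ‖a‖ ^ 2 + t ^ 2 := by
  have hlin := (hp.integrable_inner_mul a).const_mul (2 * t)
  have hsub : Integrable fun x => ⟪a, x⟫ ^ 2 * p x - 2 * t * (⟪a, x⟫ * p x) :=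
    (hp.integrable_inner_sq_mul a).sub hlin
  calc ∫ x, (⟪a, x⟫ - t) ^ 2 * p x
      = ∫ x, (⟪a, x⟫ ^ 2 * p x - 2 * t * (⟪a, x⟫ * p x) + t ^ 2 * p x) := by
        congr with x
        ring
    _ = ‖a‖ ^ 2 + t ^ 2 := by
        rw [integral_add hsub (hp.integrable.const_mul _),
          integral_sub (hp.integrable_inner_sq_mul a) hlin, integral_const_mul, integral_const_mul,
          hp.integral_inner_sq_mul, hp.integral_inner_mul, hp.integral_eq_one]
        ring

lemma integrable_norm_sq_mul (hp : IsIsotropic p) : Integrable fun x => ‖x‖ ^ 2 * p x := by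
  simp only [norm_sq_mul_eq_sum_inner_sq_mul (stdOrthonormalBasis ℝ E)]
  exact integrable_finsetSum _ fun i _ => hp.integrable_inner_sq_mul _

lemma integral_norm_sq_mul (hp : IsIsotropic p) : ∫ x, ‖x‖ ^ 2 * p x = finrank ℝ E := by
  simp only [norm_sq_mul_eq_sum_inner_sq_mul (stdOrthonormalBasis ℝ E)]
  rw [integral_finsetSum _ fun i _ => hp.integrable_inner_sq_mul _]
  simp [hp.integral_inner_sq_mul]

/- Otherwise the second moment of `⟪a, · - x⟫` would be smaller than `‖a‖ ^ 2`. -/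
lemma exists_mul_norm_le_abs_inner (hp : IsIsotropic p) (hlc : LogConcave p) (x a : E) :
    ∃ y, exp (-1) * p x ≤ p y ∧ (1 + 16 * 2 ^ finrank ℝ E : ℝ)⁻¹ * ‖a‖ ≤ |⟪a, y - x⟫| := by
  set K : ℝ := 1 + 16 * 2 ^ finrank ℝ E
  have hK1 : 1 < K := lt_add_of_pos_right _ (by positivity)
  by_contra! h
  have ha : 0 < ‖a‖ := by
    have := h x (mul_le_of_le_one_left (hlc.nonneg x) (exp_le_one_iff.2 (by norm_num)))
    exact pos_of_mul_pos_right ((abs_nonneg _).trans_lt this) (by positivity)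
  have hsq : ‖a‖ ^ 2 ≤ K⁻¹ * ‖a‖ ^ 2 := calc
    ‖a‖ ^ 2 ≤ ‖a‖ ^ 2 + ⟪a, x⟫ ^ 2 := le_add_of_nonneg_right (sq_nonneg _)
    _ = ∫ y, innerₗ E a (y - x) ^ 2 * p y := by
      simp only [innerₗ_apply_apply, inner_sub_right]
      exact (hp.integral_inner_sub_sq_mul a ⟪a, x⟫).symm
    _ ≤ (K⁻¹ * ‖a‖) ^ 2 * (K * ∫ y, p y) :=
      hlc.integral_sq_apply_sub_mul_le hp.integrable _ fun y hy => (h y hy).le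
    _ = K⁻¹ * ‖a‖ ^ 2 := by
      rw [hp.integral_eq_one]
      field_simp
  exact (mul_lt_of_lt_one_left (by positivity) (inv_lt_one_of_one_lt₀ hK1)).not_ge hsq

lemma ofReal_pow_finrank_le_volume_superlevel (hp : IsIsotropic p) (hlc : LogConcave p) (x : E) :
    ENNReal.ofReal (((1 + 16 * 2 ^ finrank ℝ E)⁻¹ / finrank ℝ E) ^ finrank ℝ E) ≤
      volume {y | exp (-1) * p x ≤ p y} := by
  rw [← measure_preimage_add volume x]
  refine ofReal_pow_finrank_le_volume_of_convex
    ((hlc.convex_superlevel _).translate_preimage_right x) ?_ (by positivity) fun f => ?_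
  · simpa using mul_le_of_le_one_left (hlc.nonneg x) (exp_le_one_iff.2 (by norm_num))
  · obtain ⟨y, hy, hfy⟩ :=
      hp.exists_mul_norm_le_abs_inner hlc x ((InnerProductSpace.toDual ℝ E).symm f)
    rw [LinearIsometryEquiv.norm_map, InnerProductSpace.toDual_symm_apply] at hfy
    exact ⟨y - x, by simpa using hy, hfy⟩

end IsIsotropic

variable (E) in
theorem exists_forall_isotropic_logConcave_le :
    ∃ A > 0, ∀ p : E → ℝ, IsIsotropic p → LogConcave p → ∀ x, p x ≤ A := by
  set v : ℝ := ((1 + 16 * 2 ^ finrank ℝ E)⁻¹ / finrank ℝ E) ^ finrank ℝ E with hv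
  have hv0 : 0 < v := by
    rcases (finrank ℝ E).eq_zero_or_pos with hn | hn
    · simp [hv, hn]
    · positivity
  refine ⟨exp 1 / v, by positivity, fun p hp hlc x => ?_⟩
  rcases (hlc.nonneg x).eq_or_lt with hx | hx
  · rw [← hx]
    positivity
  have hfin : volume {y | exp (-1) * p x ≤ p y} ≠ ⊤ :=
    (hp.integrable.measure_ge_lt_top (by positivity)).ne
  have hvol : v ≤ volume.real {y | exp (-1) * p x ≤ p y} :=
    (ENNReal.ofReal_le_iff_le_toReal hfin).1 (hp.ofReal_pow_finrank_le_volume_superlevel hlc x)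
  have hmarkov := mul_meas_ge_le_integral_of_nonneg (.of_forall hlc.nonneg) hp.integrable
    (exp (-1) * p x)
  rw [hp.integral_eq_one] at hmarkov
  rw [le_div_iff₀ hv0, ← inv_mul_le_one₀ (exp_pos 1), ← exp_neg, ← mul_assoc]
  exact (mul_le_mul_of_nonneg_left hvol (by positivity)).trans hmarkov

end Isotropic

section Tail

lemma setIntegral_le_mul_measureReal_superlevel_add {α : Type*} [MeasurableSpace α] {μ : Measure α}
    {p : α → ℝ} {s : Set α} {A c : ℝ} (hp : Integrable p μ) (h0 : ∀ x, 0 ≤ p x)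
    (hA : ∀ x, p x ≤ A) (hc : 0 ≤ c) (hs : μ s ≠ ⊤) :
    ∫ x in s, p x ∂μ ≤ A * μ.real (s ∩ {x | c ≤ p x}) + c * μ.real s := by
  have hT : NullMeasurableSet {x | c ≤ p x} μ :=
    nullMeasurableSet_le aemeasurable_const hp.aemeasurable
  rw [← integral_inter_add_sdiff₀ hT hp.integrableOn]
  have hhigh : ∫ x in s ∩ {x | c ≤ p x}, p x ∂μ ≤ A * μ.real (s ∩ {x | c ≤ p x}) :=
    (le_norm_self _).trans <| norm_setIntegral_le_of_norm_le_const
      ((measure_mono inter_subset_left).trans_lt hs.lt_top)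
      fun x _ => (norm_of_nonneg (h0 x)).trans_le (hA x)
  have hlow : ∫ x in s \ {x | c ≤ p x}, p x ∂μ ≤ c * μ.real (s \ {x | c ≤ p x}) :=
    (le_norm_self _).trans <| norm_setIntegral_le_of_norm_le_const
      ((measure_mono sdiff_subset).trans_lt hs.lt_top)
      fun x hx => (norm_of_nonneg (h0 x)).trans_le (not_le.1 hx.2).le
  gcongr
  exact hlow.trans (by gcongr; exact sdiff_subset)

lemma le_norm_homothety {E : Type*} [NormedAddCommGroup E] [NormedSpace ℝ E] {x y : E}
    {R N l : ℝ} (hl0 : 0 ≤ l) (hl1 : l ≤ 1) (hy : ‖y‖ ≤ R) (hx : R + N ≤ l * ‖x‖) :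
    N ≤ ‖AffineMap.homothety x (1 - l) y‖ := by
  rw [AffineMap.homothety_eq_lineMap, AffineMap.lineMap_apply_module, sub_sub_cancel]
  have h := norm_sub_le_norm_add (l • x) ((1 - l) • y)
  rw [norm_smul, norm_smul, norm_of_nonneg hl0, norm_of_nonneg (sub_nonneg.2 hl1)] at h
  nlinarith [norm_nonneg y]

variable {E : Type*} [NormedAddCommGroup E] [InnerProductSpace ℝ E] [FiniteDimensional ℝ E]
  [MeasurableSpace E] [BorelSpace E] {p : E → ℝ}

lemma IsIsotropic.sq_sub_finrank_le_setIntegral (hp : IsIsotropic p) (h0 : ∀ x, 0 ≤ p x)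
    {R : ℝ} (hR : 0 ≤ R) :
    R ^ 2 - finrank ℝ E ≤ R ^ 2 * ∫ x in Metric.closedBall 0 R, p x := by
  calc R ^ 2 - finrank ℝ E = ∫ x, (R ^ 2 * p x - ‖x‖ ^ 2 * p x) := by
        rw [integral_sub (hp.integrable.const_mul _) hp.integrable_norm_sq_mul,
          integral_const_mul, hp.integral_eq_one, hp.integral_norm_sq_mul, mul_one]
    _ ≤ ∫ x, (Metric.closedBall 0 R).indicator (fun x => R ^ 2 * p x) x := by
        refine integral_mono ((hp.integrable.const_mul _).sub hp.integrable_norm_sq_mul)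
          ((hp.integrable.const_mul _).indicator measurableSet_closedBall) fun x => ?_
        by_cases hx : x ∈ Metric.closedBall 0 R
        · rw [indicator_of_mem hx]
          exact sub_le_self _ (mul_nonneg (sq_nonneg _) (h0 x))
        · rw [indicator_of_notMem hx, sub_nonpos]
          have hRx : R < ‖x‖ := by simpa using hx
          exact mul_le_mul_of_nonneg_right (pow_le_pow_left₀ hR hRx.le 2) (h0 x)
    _ = R ^ 2 * ∫ x in Metric.closedBall 0 R, p x := by
        rw [integral_indicator measurableSet_closedBall, integral_const_mul]

variable (E) in
lemma exists_forall_le_volume_core : ∃ R > 0, ∃ c > 0, ∃ v > 0, ∀ p : E → ℝ, IsIsotropic p →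
    LogConcave p → v ≤ volume.real (Metric.closedBall 0 R ∩ {x | c ≤ p x}) := by
  obtain ⟨A, hA0, hA⟩ := exists_forall_isotropic_logConcave_le E
  set R : ℝ := finrank ℝ E + 1
  set V : ℝ := volume.real (Metric.closedBall (0 : E) R)
  refine ⟨R, by positivity, 1 / (4 * (V + 1)), by positivity, 1 / (4 * A), by positivity,
    fun p hp hlc => ?_⟩
  have hmass : 1 / 2 ≤ ∫ x in Metric.closedBall 0 R, p x := by
    have h := hp.sq_sub_finrank_le_setIntegral hlc.nonneg (by positivity : 0 ≤ R)
    have hn : 2 * finrank ℝ E ≤ R ^ 2 := by nlinarith [sq_nonneg (finrank ℝ E : ℝ)]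
    refine le_of_mul_le_mul_left ?_ (by positivity : 0 < R ^ 2)
    linarith
  have hlow : 1 / (4 * (V + 1)) * V ≤ 1 / 4 := by
    rw [div_mul_eq_mul_div, div_le_div_iff₀ (by positivity) (by positivity)]
    linarith
  have h := setIntegral_le_mul_measureReal_superlevel_add (c := 1 / (4 * (V + 1))) hp.integrable
    hlc.nonneg (hA p hp hlc) (by positivity) (measure_closedBall_lt_top (x := 0) (r := R)).ne
  rw [div_le_iff₀ (by positivity)]
  linarith

/- If `p x` were larger, the image of the core under the homothety of centre `x` and ratio `1 - l`
would carry too much second moment. -/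
lemma IsIsotropic.lt_mul_exp_neg_inv (hp : IsIsotropic p) (hlc : LogConcave p) {x : E}
    {R N c v l : ℝ} (hN : 0 < N) (hc : 0 < c) (hl0 : 0 < l) (hl1 : l ≤ 1 / 2)
    (hx : R + N ≤ l * ‖x‖) (hv : v ≤ volume.real (Metric.closedBall 0 R ∩ {x | c ≤ p x}))
    (hfar : finrank ℝ E < N ^ 2 * (exp (-1) * c) * ((1 / 2) ^ finrank ℝ E * v)) :
    p x < c * exp (-l⁻¹) := by
  by_contra! hpx
  set core := Metric.closedBall 0 R ∩ {x | c ≤ p x}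
  have hvol : (1 / 2) ^ finrank ℝ E * v ≤
      volume.real (AffineMap.homothety x (1 - l) '' core) := by
    have hl : 1 / 2 ≤ 1 - l := by linarith
    rw [measureReal_def, Measure.addHaar_image_homothety, ENNReal.toReal_mul,
      ENNReal.toReal_ofReal (abs_nonneg _), ← measureReal_def, abs_of_nonneg (by positivity)]
    refine (mul_le_mul_of_nonneg_left hv (by positivity)).trans ?_
    gcongr
  have hsub : AffineMap.homothety x (1 - l) '' core ⊆
      {z | N ^ 2 * (exp (-1) * c) ≤ ‖z‖ ^ 2 * p z} := by
    rintro _ ⟨y, ⟨hyR, hyc⟩, rfl⟩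
    have hl1 : l ≤ 1 := by linarith
    exact mul_le_mul
      (pow_le_pow_left₀ hN.le (le_norm_homothety hl0.le hl1 (mem_closedBall_zero_iff.1 hyR) hx) 2)
      (hlc.exp_neg_one_mul_le_homothety hc hl0 hl1 hpx hyc) (by positivity) (by positivity)
  have hmarkov := mul_meas_ge_le_integral_of_nonneg
    (.of_forall fun z => mul_nonneg (sq_nonneg _) (hlc.nonneg z)) hp.integrable_norm_sq_mul
    (N ^ 2 * (exp (-1) * c))
  rw [hp.integral_norm_sq_mul] at hmarkov
  refine hfar.not_ge (le_trans ?_ hmarkov)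
  gcongr
  exact hvol.trans (measureReal_mono hsub
    (hp.integrable_norm_sq_mul.measure_ge_lt_top (by positivity)).ne)

variable (E) in
theorem exists_forall_isotropic_logConcave_le_mul_exp :
    ∃ B > 0, ∃ L > 0, ∀ p : E → ℝ, IsIsotropic p → LogConcave p →
      ∀ x, p x ≤ B * exp (-‖x‖ / L) := by
  obtain ⟨A, hA0, hA⟩ := exists_forall_isotropic_logConcave_le E
  obtain ⟨R, hR, c, hc, v, hv, hcore⟩ := exists_forall_le_volume_core E
  set w := exp (-1) * c * ((1 / 2) ^ finrank ℝ E * v) with hw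
  have hw0 : 0 < w := by positivity
  set N := √((finrank ℝ E + 1) / w)
  have hN0 : 0 < N := by positivity
  have hN : finrank ℝ E < N ^ 2 * (exp (-1) * c) * ((1 / 2) ^ finrank ℝ E * v) := by
    rw [mul_assoc, ← hw, sq_sqrt (by positivity), div_mul_cancel₀ _ hw0.ne']
    exact lt_add_one _
  have hL : 0 < R + N := by positivity
  refine ⟨c + A * exp 2, by positivity, R + N, hL, fun p hp hlc x => ?_⟩
  rcases le_or_gt (2 * (R + N)) ‖x‖ with hx | hx
  · have hx0 : 0 < ‖x‖ := by linarith
    have h := hp.lt_mul_exp_neg_inv (l := (R + N) / ‖x‖) hlc hN0 hc (by positivity)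
      ((div_le_div_iff₀ hx0 two_pos).2 (by linarith)) (div_mul_cancel₀ _ hx0.ne').ge
      (hcore p hp hlc) hN
    rw [inv_div, ← neg_div] at h
    refine h.le.trans ?_
    gcongr
    exact le_add_of_nonneg_right (by positivity)
  · calc p x ≤ A := hA p hp hlc x
      _ ≤ A * exp 2 * exp (-‖x‖ / (R + N)) := by
        rw [mul_assoc, ← exp_add]
        refine le_mul_of_one_le_right hA0.le (one_le_exp ?_)
        rw [neg_div, ← sub_eq_add_neg, sub_nonneg, div_le_iff₀ hL]
        exact hx.le
      _ ≤ (c + A * exp 2) * exp (-‖x‖ / (R + N)) := by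
        gcongr
        exact le_add_of_nonneg_left hc.le

end Tail

section LowerBound

variable {E : Type*} [NormedAddCommGroup E] [InnerProductSpace ℝ E] [FiniteDimensional ℝ E]
  [MeasurableSpace E] [BorelSpace E]

lemma integrable_norm_pow_mul_exp_neg_norm_div [Nontrivial E] (k : ℕ) {L : ℝ} (hL : 0 < L) :
    Integrable fun x : E => ‖x‖ ^ k * exp (-‖x‖ / L) := by
  rw [integrable_fun_norm_addHaar volume (f := fun t => t ^ k * exp (-t / L))]
  refine (integrableOn_rpow_mul_exp_neg_mul_rpow (s := (finrank ℝ E - 1 + k : ℕ))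
    (neg_one_lt_zero.trans_le (Nat.cast_nonneg _)) one_pos (inv_pos.2 hL)).congr_fun
    (fun t _ => ?_) measurableSet_Ioi
  simp only [rpow_natCast, rpow_one, smul_eq_mul, pow_add, div_eq_inv_mul, neg_mul,
    mul_neg, mul_assoc]

namespace IsIsotropic

variable {p : E → ℝ}

lemma integrable_abs_inner_mul (hp : IsIsotropic p) (a : E) :
    Integrable fun x => |⟪a, x⟫| * p x :=
  (hp.integrable_inner_mul a).mono
    ((innerSL ℝ a).continuous.abs.aestronglyMeasurable.mul hp.integrable.aestronglyMeasurable)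
    (.of_forall fun x => by simp)

lemma integral_abs_inner_mul (hp : IsIsotropic p) (a : E) :
    ∫ x, |⟪a, x⟫| * p x = 2 * ∫ x, ⟪a, x⟫⁺ * p x := by
  calc ∫ x, |⟪a, x⟫| * p x = ∫ x, (|⟪a, x⟫| * p x + ⟪a, x⟫ * p x) := by
        rw [integral_add (hp.integrable_abs_inner_mul a) (hp.integrable_inner_mul a),
          hp.integral_inner_mul, add_zero]
    _ = ∫ x, 2 * (⟪a, x⟫⁺ * p x) := by
        congr with x
        rw [← add_mul, abs_add_eq_two_nsmul_posPart, two_nsmul, two_mul, add_mul]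
    _ = 2 * ∫ x, ⟪a, x⟫⁺ * p x := integral_const_mul _ _

/- Integrate `2 t ^ 2 ≤ K |t| + K⁻¹ |t| ^ 3` at `t = ⟪a, x⟫`, using `|t| ≤ ‖x‖`. -/
lemma two_le_mul_integral_abs_inner_mul_add (hp : IsIsotropic p) (h0 : ∀ x, 0 ≤ p x)
    (hp3 : Integrable fun x => ‖x‖ ^ 3 * p x) {a : E} (ha : ‖a‖ = 1) {K : ℝ} (hK : 0 < K) :
    2 ≤ K * (∫ x, |⟪a, x⟫| * p x) + K⁻¹ * ∫ x, ‖x‖ ^ 3 * p x := by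
  have habs := (hp.integrable_abs_inner_mul a).const_mul K
  have hpow := hp3.const_mul K⁻¹
  calc (2 : ℝ) = ∫ x, 2 * (⟪a, x⟫ ^ 2 * p x) := by
        rw [integral_const_mul, hp.integral_inner_sq_mul, ha]
        norm_num
    _ ≤ ∫ x, (K * (|⟪a, x⟫| * p x) + K⁻¹ * (‖x‖ ^ 3 * p x)) := by
        refine integral_mono ((hp.integrable_inner_sq_mul a).const_mul 2) (habs.add hpow)
          fun x => ?_
        have hax : |⟪a, x⟫| ≤ ‖x‖ := by simpa [ha] using abs_real_inner_le_norm a x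
        have hamgm : 2 * ⟪a, x⟫ ^ 2 ≤ K * |⟪a, x⟫| + K⁻¹ * ‖x‖ ^ 3 := calc
          2 * ⟪a, x⟫ ^ 2 = 2 * |⟪a, x⟫| ^ 2 := by rw [sq_abs]
          _ ≤ K * |⟪a, x⟫| + K⁻¹ * |⟪a, x⟫| ^ 3 := by
            have : K * |⟪a, x⟫| + K⁻¹ * |⟪a, x⟫| ^ 3 - 2 * |⟪a, x⟫| ^ 2 =
                K⁻¹ * |⟪a, x⟫| * (K - |⟪a, x⟫|) ^ 2 := by
              field_simp
              ring
            rw [← sub_nonneg, this]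
            positivity
          _ ≤ K * |⟪a, x⟫| + K⁻¹ * ‖x‖ ^ 3 := by gcongr
        simpa only [add_mul, mul_assoc] using mul_le_mul_of_nonneg_right hamgm (h0 x)
    _ = K * (∫ x, |⟪a, x⟫| * p x) + K⁻¹ * ∫ x, ‖x‖ ^ 3 * p x := by
        rw [integral_add habs hpow, integral_const_mul, integral_const_mul]

end IsIsotropic

variable [Nontrivial E]

variable (E) in
lemma exists_forall_le_integral_posPart_inner_mul :
    ∃ c > 0, ∀ p : E → ℝ, IsIsotropic p → LogConcave p →
      ∀ a : E, ‖a‖ = 1 → c ≤ ∫ x, ⟪a, x⟫⁺ * p x := by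
  obtain ⟨B, hB, L, hL, htail⟩ := exists_forall_isotropic_logConcave_le_mul_exp E
  have hint := (integrable_norm_pow_mul_exp_neg_norm_div (E := E) 3 hL).const_mul B
  set M := ∫ x : E, B * (‖x‖ ^ 3 * exp (-‖x‖ / L))
  have : 0 ≤ M := integral_nonneg fun x => by positivity
  refine ⟨1 / (2 * (M + 1)), by positivity, fun p hp hlc a ha => ?_⟩
  have hle : ∀ x, ‖x‖ ^ 3 * p x ≤ B * (‖x‖ ^ 3 * exp (-‖x‖ / L)) := fun x =>
    (mul_le_mul_of_nonneg_left (htail p hp hlc x) (by positivity)).trans_eq (mul_left_comm _ _ _)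
  have hp3 : Integrable fun x => ‖x‖ ^ 3 * p x := by
    refine hint.mono' ((continuous_norm.pow 3).aestronglyMeasurable.mul
      hp.integrable.aestronglyMeasurable) (.of_forall fun x => ?_)
    rw [norm_of_nonneg (mul_nonneg (by positivity) (hlc.nonneg x))]
    exact hle x
  have hthird : (M + 1)⁻¹ * ∫ x, ‖x‖ ^ 3 * p x ≤ 1 := by
    rw [inv_mul_le_one₀ (by positivity)]
    exact (integral_mono hp3 hint hle).trans (le_add_of_nonneg_right zero_le_one)
  have h := hp.two_le_mul_integral_abs_inner_mul_add hlc.nonneg hp3 ha (by positivity : 0 < M + 1)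
  rw [hp.integral_abs_inner_mul] at h
  rw [div_le_iff₀ (by positivity)]
  linarith

lemma exists_norm_eq_one_ae_inner_le {S : Set E} (hS : Convex ℝ S) {x : E} (hx : x ∉ S) :
    ∃ a : E, ‖a‖ = 1 ∧ ∀ᵐ y, y ∈ S → ⟪a, y⟫ ≤ ⟪a, x⟫ := by
  rcases (interior S).eq_empty_or_nonempty with hint | hint
  · obtain ⟨a, ha⟩ := exists_norm_eq E zero_le_one
    refine ⟨a, ha, ?_⟩
    have hnull : volume S = 0 := by
      refine measure_mono_null (fun y hy => ?_) (hS.addHaar_frontier volume)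
      rw [frontier, hint, sdiff_empty]
      exact subset_closure hy
    filter_upwards [measure_eq_zero_iff_ae_notMem.1 hnull] with y hy hyS
    exact absurd hyS hy
  · obtain ⟨f, hf, hfx⟩ := geometric_hahn_banach_of_nonempty_interior_point hS
      (fun h => hx (interior_subset h)) hint
    have hf0 : 0 < ‖f‖ := norm_pos_iff.2 hf
    refine ⟨‖f‖⁻¹ • (InnerProductSpace.toDual ℝ E).symm f, ?_, .of_forall fun y hy => ?_⟩
    · rw [norm_smul, LinearIsometryEquiv.norm_map, norm_inv, norm_norm, inv_mul_cancel₀ hf0.ne']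
    · simp only [real_inner_smul_left, InnerProductSpace.toDual_symm_apply]
      exact mul_le_mul_of_nonneg_left (hfx y hy) (inv_nonneg.2 hf0.le)

/- If `p x < s ^ 2`, separate `x` from `{s ^ 2 ≤ p}`: on the far side of the hyperplane `p ≤ s √p`,
and on the near side `⟪a, y⟫ ≤ s`. -/
lemma LogConcave.exists_norm_eq_one_integral_posPart_inner_mul_le {p : E → ℝ} (hlc : LogConcave p)
    (hp : IsIsotropic p) {g : E → ℝ} (hg : Integrable g) (hpg : ∀ y, ‖y‖ * √(p y) ≤ g y) {s : ℝ}
    {x : E} (hx : ‖x‖ ≤ s) (hpx : p x < s ^ 2) :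
    ∃ a : E, ‖a‖ = 1 ∧ ∫ y, ⟪a, y⟫⁺ * p y ≤ s * (1 + ∫ y, g y) := by
  have hs : 0 ≤ s := (norm_nonneg x).trans hx
  obtain ⟨a, ha, hax⟩ := exists_norm_eq_one_ae_inner_le (hlc.convex_superlevel (s ^ 2))
    (notMem_ofPred_iff.2 hpx.not_ge)
  have hinner : ∀ y, ⟪a, y⟫ ≤ ‖y‖ := fun y => by simpa [ha] using real_inner_le_norm a y
  have hg0 : ∀ y, 0 ≤ g y := fun y => le_trans (by positivity) (hpg y)
  have hle : ∀ᵐ y, ⟪a, y⟫⁺ * p y ≤ s * (p y + g y) := by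
    filter_upwards [hax] with y hy
    have hpy := hlc.nonneg y
    rcases le_or_gt (s ^ 2) (p y) with hys | hys
    · calc ⟪a, y⟫⁺ * p y ≤ s * p y := by
            gcongr
            exact sup_le ((hy hys).trans ((hinner x).trans hx)) hs
        _ ≤ s * (p y + g y) := by
            gcongr
            exact le_add_of_nonneg_right (hg0 y)
    · calc ⟪a, y⟫⁺ * p y = ⟪a, y⟫⁺ * (√(p y) * √(p y)) := by rw [mul_self_sqrt hpy]
        _ ≤ ‖y‖ * (s * √(p y)) := by
            gcongr
            · exact sup_le (hinner y) (norm_nonneg y)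
            · exact sqrt_le_iff.2 ⟨hs, hys.le⟩
        _ = s * (‖y‖ * √(p y)) := mul_left_comm _ _ _
        _ ≤ s * (p y + g y) := by
            gcongr
            exact (hpg y).trans (le_add_of_nonneg_left hpy)
  refine ⟨a, ha, ?_⟩
  calc ∫ y, ⟪a, y⟫⁺ * p y ≤ ∫ y, s * (p y + g y) :=
        integral_mono_of_nonneg (.of_forall fun y => mul_nonneg (posPart_nonneg _) (hlc.nonneg y))
          ((hp.integrable.add hg).const_mul s) hle
    _ = s * (1 + ∫ y, g y) := by
        rw [integral_const_mul, integral_add hp.integrable hg, hp.integral_eq_one]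

variable (E) in
theorem exists_forall_isotropic_logConcave_sq_le :
    ∃ s > 0, ∀ p : E → ℝ, IsIsotropic p → LogConcave p → ∀ x, ‖x‖ ≤ s → s ^ 2 ≤ p x := by
  obtain ⟨B, hB, L, hL, htail⟩ := exists_forall_isotropic_logConcave_le_mul_exp E
  obtain ⟨c, hc, hpos⟩ := exists_forall_le_integral_posPart_inner_mul E
  have hint : Integrable fun y : E => √B * (‖y‖ ^ 1 * exp (-‖y‖ / (L * 2))) :=
    (integrable_norm_pow_mul_exp_neg_norm_div 1 (by positivity)).const_mul _
  set J := ∫ y : E, √B * (‖y‖ ^ 1 * exp (-‖y‖ / (L * 2)))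
  have hJ : 0 ≤ J := integral_nonneg fun x => by positivity
  refine ⟨c / (2 * (1 + J)), by positivity, fun p hp hlc x hx => ?_⟩
  by_contra! hpx
  have hsqrt : ∀ y, ‖y‖ * √(p y) ≤ √B * (‖y‖ ^ 1 * exp (-‖y‖ / (L * 2))) := fun y => by
    calc ‖y‖ * √(p y) ≤ ‖y‖ * √(B * exp (-‖y‖ / L)) := by
          gcongr
          exact htail p hp hlc y
      _ = √B * (‖y‖ ^ 1 * exp (-‖y‖ / (L * 2))) := by
          rw [sqrt_mul hB.le, ← exp_half, div_div, pow_one, mul_left_comm]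
  obtain ⟨a, ha, hle⟩ :=
    hlc.exists_norm_eq_one_integral_posPart_inner_mul_le hp hint hsqrt hx hpx
  have h : c ≤ c / 2 := calc
    c ≤ c / (2 * (1 + J)) * (1 + J) := (hpos p hp hlc a ha).trans hle
    _ = c / 2 := by field_simp
  linarith

end LowerBound

theorem exists_forall_isotropic_logConcave_bounds (E : Type*) [NormedAddCommGroup E]
    [InnerProductSpace ℝ E] [FiniteDimensional ℝ E] [Nontrivial E] [MeasurableSpace E]
    [BorelSpace E] :
    ∃ C : ℝ, 0 < C ∧ ∀ p : E → ℝ, IsIsotropic p → LogConcave p →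
      (∀ x, p x ≤ C) ∧ (∀ x, ‖x‖ ≤ C⁻¹ → C⁻¹ ≤ p x) ∧ ∀ x, p x ≤ C * exp (-‖x‖ / C) := by
  obtain ⟨B, hB, L, hL, htail⟩ := exists_forall_isotropic_logConcave_le_mul_exp E
  obtain ⟨s, hs, hlow⟩ := exists_forall_isotropic_logConcave_sq_le E
  obtain ⟨C, hBC, hLC, hsC, hsqC⟩ : ∃ C, B ≤ C ∧ L ≤ C ∧ s⁻¹ ≤ C ∧ (s ^ 2)⁻¹ ≤ C :=
    ⟨max (max B L) (max s⁻¹ (s ^ 2)⁻¹), by simp⟩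
  have hC : 0 < C := hB.trans_le hBC
  refine ⟨C, hC, fun p hp hlc => ⟨fun x => ?_, fun x hx => ?_, fun x => ?_⟩⟩
  · calc p x ≤ B * exp (-‖x‖ / L) := htail p hp hlc x
      _ ≤ B * 1 := by
        gcongr
        exact exp_le_one_iff.2 (div_nonpos_of_nonpos_of_nonneg (by simp) hL.le)
      _ ≤ C := by rwa [mul_one]
  · exact (inv_le_of_inv_le₀ (by positivity) hsqC).trans
      (hlow p hp hlc x (hx.trans (inv_le_of_inv_le₀ hs hsC)))
  · calc p x ≤ B * exp (-‖x‖ / L) := htail p hp hlc x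
      _ ≤ C * exp (-‖x‖ / C) := by
        rw [neg_div, neg_div]
        gcongr

section Coordinates

variable {ι : Type*} [Fintype ι]

lemma integral_sum_mul_mul {α : Type*} [MeasurableSpace α] {μ : Measure α} {f : ι → α → ℝ}
    {p : α → ℝ} (h : ∀ i, Integrable (fun x => f i x * p x) μ) (a : ι → ℝ) :
    ∫ x, (∑ i, a i * f i x) * p x ∂μ = ∑ i, a i * ∫ x, f i x * p x ∂μ := by
  simp only [Finset.sum_mul, mul_assoc]
  rw [integral_finsetSum _ fun i _ => (h i).const_mul _]
  simp only [integral_const_mul]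

lemma integral_sum_mul_sq_mul {α : Type*} [MeasurableSpace α] {μ : Measure α} {f : ι → α → ℝ}
    {p : α → ℝ} (h : ∀ i j, Integrable (fun x => f i x * f j x * p x) μ) (a : ι → ℝ) :
    ∫ x, (∑ i, a i * f i x) ^ 2 * p x ∂μ =
      ∑ i, ∑ j, a i * a j * ∫ x, f i x * f j x * p x ∂μ := by
  have h' := fun i j => (h i j).const_mul (a i * a j)
  have hexp : ∀ x, (∑ i, a i * f i x) ^ 2 * p x =
      ∑ i, ∑ j, a i * a j * (f i x * f j x * p x) := fun x => by
    simp only [sq, Finset.sum_mul_sum]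
    rw [Finset.sum_mul]
    refine Finset.sum_congr rfl fun i _ => ?_
    rw [Finset.sum_mul]
    exact Finset.sum_congr rfl fun j _ => by ring
  simp only [hexp]
  rw [integral_finsetSum _ fun i _ => integrable_finsetSum _ fun j _ => h' i j]
  refine Finset.sum_congr rfl fun i _ => ?_
  rw [integral_finsetSum _ fun j _ => h' i j]
  simp only [integral_const_mul]

lemma integral_euclideanSpace_comp_ofLp {F : Type*} [NormedAddCommGroup F] [NormedSpace ℝ F]
    (g : (ι → ℝ) → F) : ∫ x : EuclideanSpace ℝ ι, g x.ofLp = ∫ x, g x :=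
  (PiLp.volume_preserving_ofLp ι).integral_comp
    (MeasurableEquiv.toLp 2 (ι → ℝ)).symm.measurableEmbedding g

lemma IsIsotropic.of_coord [DecidableEq ι] {p : (ι → ℝ) → ℝ} (hone : ∫ x, p x = 1)
    (hmean : ∀ i, ∫ x, x i * p x = 0)
    (hcov : ∀ i j, ∫ x, x i * x j * p x = if i = j then 1 else 0) :
    IsIsotropic fun x : EuclideanSpace ℝ ι => p x.ofLp := by
  have hint : Integrable p := integrable_of_integral_eq_one hone
  have hcoord : ∀ i, AEStronglyMeasurable (fun x : ι → ℝ => x i) volume := fun i =>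
    (continuous_apply i).aestronglyMeasurable
  have hsq : ∀ i, Integrable fun x : ι → ℝ => x i ^ 2 * p x := fun i =>
    integrable_of_integral_eq_one (by simp only [sq, hcov, if_pos])
  have hinner : ∀ a x : EuclideanSpace ℝ ι, ⟪a, x⟫ = ∑ i, a i * x i := fun a x => by
    simp [PiLp.inner_apply, mul_comm]
  refine ⟨(integral_euclideanSpace_comp_ofLp p).trans hone, fun a => ?_, fun a => ?_⟩
  · simp only [hinner]
    rw [integral_euclideanSpace_comp_ofLp fun x => (∑ i, a i * x i) * p x,
      integral_sum_mul_mul fun i => integrable_mul_of_sq (hcoord i) hint (hsq i)]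
    simp [hmean]
  · simp only [hinner]
    rw [integral_euclideanSpace_comp_ofLp fun x => (∑ i, a i * x i) ^ 2 * p x,
      integral_sum_mul_sq_mul fun i j => integrable_mul_mul_of_sq (hcoord i) (hcoord j)
        hint.aestronglyMeasurable (hsq i) (hsq j)]
    simp [hcov, EuclideanSpace.real_norm_sq_eq, ← sq]

end Coordinates

lemma IsLogConcaveFn.logConcave_comp_ofLp {m : ℕ} {p : (Fin m → ℝ) → ℝ} (hp : IsLogConcaveFn p)
    (h0 : ∀ x, 0 ≤ p x) : LogConcave fun x : EuclideanSpace ℝ (Fin m) => p x.ofLp where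
  nonneg _ := h0 _
  rpow_mul_rpow_le x y a b ha hb hab := by
    obtain rfl : b = 1 - a := by linarith
    exact hp x.ofLp y.ofLp a ha (sub_nonneg.1 hb)

lemma norm_toLp_eq_eNorm {m : ℕ} (x : Fin m → ℝ) : ‖WithLp.toLp 2 x‖ = eNorm x := by
  simp [EuclideanSpace.norm_eq, eNorm]

/-- For each `m ≥ 1` there is `C > 0` depending only on `m` such that every
isotropic log-concave probability density `p` on `ℝ^m` satisfies
(i) `p ≤ C`, (ii) `p(x) ≥ C⁻¹` for `‖x‖ ≤ C⁻¹`, (iii) `p(x) ≤ C exp(−‖x‖/C)`. -/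
theorem stmt_17 (m : ℕ) (hm : 1 ≤ m) :
    ∃ C : ℝ, 0 < C ∧
      ∀ p : (Fin m → ℝ) → ℝ,
        (∀ x, 0 ≤ p x) →
        (∫ x, p x ∂(MeasureTheory.volume) = 1) →
        IsLogConcaveFn p →
        (∀ i, ∫ x, x i * p x ∂(MeasureTheory.volume) = 0) →
        (∀ i j, ∫ x, x i * x j * p x ∂(MeasureTheory.volume)
            = if i = j then (1 : ℝ) else 0) →
        (∀ x, p x ≤ C) ∧
        (∀ x : Fin m → ℝ, eNorm x ≤ C⁻¹ → C⁻¹ ≤ p x) ∧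
        (∀ x : Fin m → ℝ, p x ≤ C * Real.exp (- eNorm x / C)) := by
  have : NeZero m := ⟨Nat.one_le_iff_ne_zero.1 hm⟩
  obtain ⟨C, hC, h⟩ := exists_forall_isotropic_logConcave_bounds (EuclideanSpace ℝ (Fin m))
  refine ⟨C, hC, fun p h0 hone hlc hmean hcov => ?_⟩
  obtain ⟨hsup, hlow, htail⟩ := h _ (.of_coord hone hmean hcov) (hlc.logConcave_comp_ofLp h0)
  simp only [← norm_toLp_eq_eNorm]
  exact ⟨fun x => hsup (.toLp 2 x), fun x => hlow (.toLp 2 x), fun x => htail (.toLp 2 x)⟩
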